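/- There exists a constant c ≥ 1, depending only on d, R and κ, such that for all x,t ∈ ℝ^d and all r > 0 with d(x,t) := min_{σ∈G} |x − σ(t)| ≤ r, one has c^{-1} |B(t,r)|_κ ≤ |B(x,r)|_κ ≤ c |B(t,r)|_κ. In particular, for all x,t ∈ ℝ^d and y > 0, |B(x, y+|x−t|)|_κ ≍ |B(t, y+|x−t|)|_κ and |B(x, y+d(x,t))|_κ ≍ |B(t, y+d(x,t))|_κ with constants independent of x, t, y. -/

import Mathlib

/-!
The measure `W_κ dx` is doubling and `G`-invariant. If `d(x,t) ≤ r`, some `σ ∈ G` satisfies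
`|x - σ(t)| < 2r`, so `|B(t,r)|_κ = |B(σ(t),r)|_κ ≤ |B(x,3r)|_κ ≤ C |B(x,r)|_κ`, and the roles of
`x` and `t` can be exchanged. The slack between `r` and `2r` spares us from knowing that the infimum
defining `d(x,t)` is attained.

Doubling holds for every weight `∏ |fᵢ|^{kᵢ}` with `fᵢ` linear and `kᵢ ≥ 0`: each ball `B(x,r)`
contains a ball of comparable radius that stays so far from all the hyperplanes `fᵢ = 0` that every
`|fᵢ|` is there at least a fixed fraction of its supremum over `B(x,3r)`. Invariance is visible once
the weight is written as a product over all roots, because a reflection permutes `R`.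
-/

open MeasureTheory Filter Metric
open scoped RealInnerProductSpace Topology

noncomputable section

/-- Euclidean space `ℝ^d`. -/
abbrev Ed (d : ℕ) : Type := EuclideanSpace ℝ (Fin d)

/-- The reflection `σ_α(x) = x - ⟨α,x⟩α` (for roots normalized by `⟨α,α⟩ = 2`). -/
def reflAt {d : ℕ} (α x : Ed d) : Ed d := x - ⟪α, x⟫ • α

/-- The reflection group `G` generated by the reflections `σ_α`, `α ∈ R`, realized as the
submonoid of self-maps of `ℝ^d` generated by the reflections (each reflection is an
involution, so this is in fact a group of transformations). -/
def dunklGroup {d : ℕ} (R : Finset (Ed d)) : Submonoid (Function.End (Ed d)) :=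
  Submonoid.closure {f : Function.End (Ed d) | ∃ α ∈ R, f = reflAt α}

/-- A (normalized) root system `R` with positive subsystem `Rp` and
`G`-invariant nonnegative multiplicity function `κ`. -/
structure IsRootSystem {d : ℕ} (R Rp : Finset (Ed d)) (κ : Ed d → ℝ) : Prop where
  nonzero : ∀ α ∈ R, α ≠ (0 : Ed d)
  norm_two : ∀ α ∈ R, ⟪α, α⟫ = (2 : ℝ)
  refl_mem : ∀ α ∈ R, ∀ β ∈ R, reflAt α β ∈ R
  pos_sub : Rp ⊆ R
  pos_split : ∀ α ∈ R, (α ∈ Rp ∧ ¬(-α ∈ Rp)) ∨ (¬(α ∈ Rp) ∧ -α ∈ Rp)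
  kappa_nonneg : ∀ α ∈ R, 0 ≤ κ α
  kappa_inv : ∀ σ ∈ dunklGroup R, ∀ α ∈ R, κ (σ α) = κ α

/-- `x ∈ ℝ^d` is regular if `⟨α,x⟩ ≠ 0` for all roots `α ∈ R`. -/
def isRegular {d : ℕ} (R : Finset (Ed d)) (x : Ed d) : Prop :=
  ∀ α ∈ R, ⟪α, x⟫ ≠ (0 : ℝ)

/-- Second directional derivative of `u` at `p` in direction `v`. -/
def pd2 {d : ℕ} (u : Ed d × ℝ → ℝ) (p v : Ed d × ℝ) : ℝ :=
  fderiv ℝ (fun q => fderiv ℝ u q v) p v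

/-- The Euclidean Laplacian on `ℝ^{d+1} = ℝ^d × ℝ`. -/
def lapE {d : ℕ} (u : Ed d × ℝ → ℝ) (p : Ed d × ℝ) : ℝ :=
  (∑ i : Fin d, pd2 u p (EuclideanSpace.single i 1, 0)) + pd2 u p (0, 1)

/-- The Dunkl Laplacian `Δ_κ` on `ℝ^{d+1}` (the Dunkl operators act in the `x`-variables). -/
def dunklLap {d : ℕ} (Rp : Finset (Ed d)) (κ : Ed d → ℝ) (u : Ed d × ℝ → ℝ)
    (p : Ed d × ℝ) : ℝ :=
  lapE u p + 2 * ∑ α ∈ Rp, κ α *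
    (fderiv ℝ u p (α, 0) / ⟪α, p.1⟫ - (u p - u (reflAt α p.1, p.2)) / ⟪α, p.1⟫ ^ 2)

/-- The open upper half-space `ℝ^{d+1}₊`. -/
def upperHS (d : ℕ) : Set (Ed d × ℝ) := {p | 0 < p.2}

/-- `u` is `κ`-harmonic on `Ω`: `u` is `C²` on `Ω` and `Δ_κ u = 0` at every point of `Ω`
whose `x`-coordinate is regular. -/
def KHarmonicOn {d : ℕ} (R Rp : Finset (Ed d)) (κ : Ed d → ℝ) (u : Ed d × ℝ → ℝ)
    (Ω : Set (Ed d × ℝ)) : Prop :=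
  ContDiffOn ℝ 2 u Ω ∧ ∀ p ∈ Ω, isRegular R p.1 → dunklLap Rp κ u p = 0

/-- The cone `Γ_a(x)` of aperture `a` with vertex `(x,0)`. -/
def cone {d : ℕ} (a : ℝ) (x : Ed d) : Set (Ed d × ℝ) :=
  {p | 0 < p.2 ∧ dist p.1 x < a * p.2}

/-- The truncated cone `Γ_a^h(x)`. -/
def coneT {d : ℕ} (a h : ℝ) (x : Ed d) : Set (Ed d × ℝ) :=
  {p | 0 < p.2 ∧ p.2 < h ∧ dist p.1 x < a * p.2}

/-- `u` has a finite non-tangential limit at `(x,0)`. -/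
def HasNTLimit {d : ℕ} (u : Ed d × ℝ → ℝ) (x : Ed d) : Prop :=
  ∀ a > (0 : ℝ), ∃ L : ℝ, Tendsto u (𝓝[cone a x] (x, (0 : ℝ))) (𝓝 L)

/-- `u` is non-tangentially bounded at `(x,0)`. -/
def NTBounded {d : ℕ} (u : Ed d × ℝ → ℝ) (x : Ed d) : Prop :=
  ∃ a > (0 : ℝ), ∃ h > (0 : ℝ), ∃ M : ℝ, ∀ p ∈ coneT a h x, |u p| ≤ M

/-- A subset of `ℝ^d` is `G`-invariant. -/
def GInvSet {d : ℕ} (R : Finset (Ed d)) (E : Set (Ed d)) : Prop :=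
  ∀ σ ∈ dunklGroup R, σ '' E = E

/-- The Dunkl weight `W_κ(x) = ∏_{α ∈ R₊} |⟨α,x⟩|^{2κ(α)}`. -/
def Wk {d : ℕ} (Rp : Finset (Ed d)) (κ : Ed d → ℝ) (x : Ed d) : ℝ :=
  ∏ α ∈ Rp, |⟪α, x⟫| ^ (2 * κ α)

/-- The weighted measure `|A|_κ = ∫_A W_κ(x) dx`. -/
def wMeas {d : ℕ} (Rp : Finset (Ed d)) (κ : Ed d → ℝ) (A : Set (Ed d)) : ℝ :=
  ∫ x in A, Wk Rp κ x

/-- The `G`-orbit distance `d(x,t) = min_{σ ∈ G} |x - σ(t)|`. -/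
def dG {d : ℕ} (R : Finset (Ed d)) (x t : Ed d) : ℝ :=
  sInf ((fun σ : Function.End (Ed d) => dist x (σ t)) ''
    (dunklGroup R : Set (Function.End (Ed d))))

/-! ### Sub-balls away from finitely many hyperplanes -/

section NormedSpace

variable {ι E : Type*} [NormedAddCommGroup E] [NormedSpace ℝ E]

lemma exists_norm_le_one_half_opNorm_le_abs_apply (f : StrongDual ℝ E) :
    ∃ v : E, ‖v‖ ≤ 1 ∧ ‖f‖ / 2 ≤ |f v| := by
  rcases eq_or_ne f 0 with rfl | hf
  · exact ⟨0, by simp, by simp⟩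
  · obtain ⟨v, hv, hfv⟩ := f.exists_lt_apply_of_lt_opNorm (half_lt_self (norm_pos_iff.2 hf))
    exact ⟨v, hv.le, hfv.le⟩

lemma exists_mem_closedBall_le_abs_apply (f : StrongDual ℝ E) (x : E) {ρ : ℝ} (hρ : 0 ≤ ρ) :
    ∃ y ∈ closedBall x ρ, |f x| + ‖f‖ / 2 * ρ ≤ |f y| := by
  obtain ⟨v, hv, hfv⟩ := exists_norm_le_one_half_opNorm_le_abs_apply f
  have hnorm : ‖ρ • v‖ ≤ ρ := by
    rw [norm_smul, Real.norm_of_nonneg hρ]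
    exact mul_le_of_le_one_right hρ hv
  have hshift : ‖f‖ / 2 * ρ ≤ |f (ρ • v)| := by
    rw [map_smul, smul_eq_mul, abs_mul, abs_of_nonneg hρ, mul_comm ρ]
    gcongr
  have hsign : |f x| + |f (ρ • v)| ≤ |f (x + ρ • v)| ∨ |f x| + |f (ρ • v)| ≤ |f (x - ρ • v)| := by
    rw [map_add, map_sub]
    grind
  rcases hsign with h | h
  · exact ⟨x + ρ • v, by simpa using hnorm, by linarith⟩
  · exact ⟨x - ρ • v, by simpa using hnorm, by linarith⟩

lemma abs_apply_le_of_mem_ball (f : StrongDual ℝ E) {x y : E} {r : ℝ} (hy : y ∈ ball x r) :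
    |f y| ≤ |f x| + ‖f‖ * r := by
  have hdiff : |f (y - x)| ≤ ‖f‖ * r :=
    f.le_opNorm_of_le (mem_ball_iff_norm.1 hy).le
  calc |f y| = |f x + f (y - x)| := by rw [map_sub, add_sub_cancel]
    _ ≤ |f x| + |f (y - x)| := abs_add_le _ _
    _ ≤ |f x| + ‖f‖ * r := by gcongr

lemma exists_ball_subset_abs_apply_le (f : StrongDual ℝ E) {Λ : ℝ} (hΛ : 1 ≤ Λ) (x : E) {r : ℝ}
    (hr : 0 < r) :
    ∃ y, ball y (r / (8 * Λ)) ⊆ ball x r ∧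
      ∀ z ∈ ball x (Λ * r), ∀ w ∈ ball y (r / (8 * Λ)), |f z| ≤ 8 * Λ * |f w| := by
  obtain ⟨y, hy, hfy⟩ := exists_mem_closedBall_le_abs_apply f x (half_pos hr).le
  rw [mem_closedBall] at hy
  have hrad : r / (8 * Λ) ≤ r / 8 := by gcongr; linarith
  refine ⟨y, ball_subset_ball' (by linarith), fun z hz w hw => ?_⟩
  have hfz := abs_apply_le_of_mem_ball f hz
  have hfw : |f y| ≤ |f w| + ‖f‖ * (r / 8) :=
    abs_apply_le_of_mem_ball f (mem_ball_comm.1 (ball_subset_ball hrad hw))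
  calc |f z| ≤ |f x| + ‖f‖ * (Λ * r) := hfz
    _ ≤ 8 * Λ * |f x| + ‖f‖ * (Λ * r) := by
      gcongr
      exact le_mul_of_one_le_left (abs_nonneg _) (by linarith)
    _ = 8 * Λ * (|f x| + ‖f‖ * (r / 8)) := by ring
    _ ≤ 8 * Λ * |f w| := by
      gcongr
      linarith

lemma exists_ball_subset_forall_abs_apply_le (s : Finset ι) (f : ι → StrongDual ℝ E) {Λ : ℝ}
    (hΛ : 1 ≤ Λ) :
    ∃ A : ℝ, 1 ≤ A ∧ ∀ (x : E) (r : ℝ), 0 < r → ∃ y, ball y (r / A) ⊆ ball x r ∧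
      ∀ z ∈ ball x (Λ * r), ∀ w ∈ ball y (r / A), ∀ i ∈ s, |f i z| ≤ A * |f i w| := by
  classical
  -- `Λ` has to vary: relative to the smaller ball given by `f j`, the ball `B(x, Λ r)` is larger.
  induction s using Finset.induction_on generalizing Λ with
  | empty => exact ⟨1, le_rfl, fun x r _ => ⟨x, by simp, by simp⟩⟩
  | insert j s _ ih =>
    have hB : 1 ≤ 8 * Λ := by linarith
    obtain ⟨A, hA, hball⟩ :=
      ih (Λ := 8 * Λ * (Λ + 1)) (one_le_mul_of_one_le_of_one_le hB (by linarith))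
    refine ⟨8 * Λ * A, one_le_mul_of_one_le_of_one_le hB hA, fun x r hr => ?_⟩
    obtain ⟨y, hyx, hj⟩ := exists_ball_subset_abs_apply_le (f j) hΛ x hr
    obtain ⟨y', hyy', hs⟩ := hball y (r / (8 * Λ)) (by positivity)
    rw [div_div] at hyy' hs
    have hyr : dist x y < r := mem_ball'.1 (hyx (mem_ball_self (by positivity)))
    have hlarge : ball x (Λ * r) ⊆ ball y (8 * Λ * (Λ + 1) * (r / (8 * Λ))) := by
      apply ball_subset_ball'
      calc Λ * r + dist x y ≤ (Λ + 1) * r := by linarith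
        _ = 8 * Λ * (Λ + 1) * (r / (8 * Λ)) := by field_simp
    refine ⟨y', hyy'.trans hyx, fun z hz w hw i hi => ?_⟩
    rcases Finset.mem_insert.1 hi with rfl | hi
    · refine (hj z hz w (hyy' hw)).trans (mul_le_mul_of_nonneg_right ?_ (abs_nonneg _))
      exact le_mul_of_one_le_right (zero_le_one.trans hB) hA
    · refine (hs z (hlarge hz) w hw i hi).trans ?_
      gcongr
      exact le_mul_of_one_le_left (by positivity) hB

/-! ### Doubling for products of powers of linear forms -/

/-- The weight `∏ |fᵢ|^{kᵢ}` of a finite family of linear forms. The Dunkl weight is the case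
`f α = ⟪α, ·⟫`, `k α = 2 κ(α)`. -/
def linearFormWeight (s : Finset ι) (f : ι → StrongDual ℝ E) (k : ι → ℝ) (x : E) : ℝ :=
  ∏ i ∈ s, |f i x| ^ k i

variable {s : Finset ι} {f : ι → StrongDual ℝ E} {k : ι → ℝ}

lemma linearFormWeight_nonneg (x : E) : 0 ≤ linearFormWeight s f k x :=
  Finset.prod_nonneg fun _ _ => by positivity

lemma continuous_linearFormWeight (hk : ∀ i ∈ s, 0 ≤ k i) :
    Continuous (linearFormWeight s f k) :=
  continuous_finsetProd _ fun i hi =>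
    (f i).continuous.abs.rpow_const fun _ => Or.inr (hk i hi)

lemma linearFormWeight_le_mul (hk : ∀ i ∈ s, 0 ≤ k i) {A : ℝ} (hA : 0 < A) {z w : E}
    (h : ∀ i ∈ s, |f i z| ≤ A * |f i w|) :
    linearFormWeight s f k z ≤ A ^ (∑ i ∈ s, k i) * linearFormWeight s f k w :=
  calc linearFormWeight s f k z ≤ ∏ i ∈ s, (A * |f i w|) ^ k i :=
        Finset.prod_le_prod (fun _ _ => by positivity) fun i hi =>
          Real.rpow_le_rpow (abs_nonneg _) (h i hi) (hk i hi)
    _ = A ^ (∑ i ∈ s, k i) * linearFormWeight s f k w := by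
      simp only [Real.mul_rpow hA.le (abs_nonneg _), Finset.prod_mul_distrib,
        Real.rpow_sum_of_pos hA, linearFormWeight]

end NormedSpace

lemma measureReal_mul_setIntegral_le {X : Type*} [MeasurableSpace X] {μ : Measure X}
    {S T : Set X} {w : X → ℝ} {A : ℝ} (hS : MeasurableSet S) (hT : MeasurableSet T)
    (hμS : μ S ≠ ⊤) (hμT : μ T ≠ ⊤) (hwS : IntegrableOn w S μ) (hwT : IntegrableOn w T μ)
    (h : ∀ z ∈ S, ∀ z' ∈ T, w z ≤ A * w z') :
    μ.real T * ∫ z in S, w z ∂μ ≤ A * μ.real S * ∫ z in T, w z ∂μ := by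
  have hpoint : ∀ z' ∈ T, ∫ z in S, w z ∂μ ≤ A * μ.real S * w z' := fun z' hz' =>
    calc ∫ z in S, w z ∂μ ≤ ∫ _ in S, A * w z' ∂μ :=
          setIntegral_mono_on hwS (integrableOn_const hμS) hS fun z hz => h z hz z' hz'
      _ = A * μ.real S * w z' := by rw [setIntegral_const, smul_eq_mul]; ring
  calc μ.real T * ∫ z in S, w z ∂μ = ∫ _ in T, ∫ z in S, w z ∂μ ∂μ := by
        rw [setIntegral_const, smul_eq_mul]
    _ ≤ ∫ z' in T, A * μ.real S * w z' ∂μ :=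
        setIntegral_mono_on (integrableOn_const hμT) (hwT.const_mul _) hT hpoint
    _ = A * μ.real S * ∫ z in T, w z ∂μ := integral_const_mul _ _

section Haar

variable {E : Type*} [NormedAddCommGroup E] [NormedSpace ℝ E] [FiniteDimensional ℝ E]
  [MeasurableSpace E] [BorelSpace E] (μ : Measure E) [μ.IsAddHaarMeasure]

lemma measureReal_ball_mul (x y : E) {a : ℝ} (ha : 0 < a) (r : ℝ) :
    μ.real (ball x (a * r)) = a ^ Module.finrank ℝ E * μ.real (ball y r) := by
  rw [measureReal_def, Measure.addHaar_ball_mul_of_pos μ x ha r, ENNReal.toReal_mul,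
    ENNReal.toReal_ofReal (by positivity), ← measureReal_def,
    ← Measure.addHaar_real_ball_center μ y]

variable {ι : Type*} {s : Finset ι} {k : ι → ℝ}

lemma integrableOn_ball_linearFormWeight (f : ι → StrongDual ℝ E) (hk : ∀ i ∈ s, 0 ≤ k i)
    (x : E) (r : ℝ) : IntegrableOn (linearFormWeight s f k) (ball x r) μ :=
  ((continuous_linearFormWeight hk).continuousOn.integrableOn_compact
    (isCompact_closedBall x r)).mono_set ball_subset_closedBall

lemma setIntegral_ball_linearFormWeight_mono (f : ι → StrongDual ℝ E) (hk : ∀ i ∈ s, 0 ≤ k i)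
    {x y : E} {r ρ : ℝ} (h : ball x r ⊆ ball y ρ) :
    ∫ z in ball x r, linearFormWeight s f k z ∂μ ≤ ∫ z in ball y ρ, linearFormWeight s f k z ∂μ :=
  setIntegral_mono_set (integrableOn_ball_linearFormWeight μ f hk y ρ)
    (Eventually.of_forall linearFormWeight_nonneg) h.eventuallyLE

lemma exists_setIntegral_ball_mul_linearFormWeight_le (f : ι → StrongDual ℝ E)
    (hk : ∀ i ∈ s, 0 ≤ k i) {Λ : ℝ} (hΛ : 1 ≤ Λ) :
    ∃ C : ℝ, 1 ≤ C ∧ ∀ (x : E) (r : ℝ), 0 < r →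
      ∫ z in ball x (Λ * r), linearFormWeight s f k z ∂μ ≤
        C * ∫ z in ball x r, linearFormWeight s f k z ∂μ := by
  obtain ⟨A, hA, hball⟩ := exists_ball_subset_forall_abs_apply_le s f hΛ
  have hA0 : 0 < A := by linarith
  set K : ℝ := A ^ ∑ i ∈ s, k i
  set n : ℕ := Module.finrank ℝ E
  refine ⟨K * (Λ * A) ^ n,
    one_le_mul_of_one_le_of_one_le (Real.one_le_rpow hA (Finset.sum_nonneg hk))
      (one_le_pow₀ (one_le_mul_of_one_le_of_one_le hΛ hA)), fun x r hr => ?_⟩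
  obtain ⟨y, hsub, hcomp⟩ := hball x r hr
  have hvol : μ.real (ball x (Λ * r)) = (Λ * A) ^ n * μ.real (ball y (r / A)) := by
    rw [← measureReal_ball_mul μ x y (by positivity), mul_assoc, mul_div_cancel₀ r hA0.ne']
  have hcross := measureReal_mul_setIntegral_le (μ := μ) measurableSet_ball measurableSet_ball
    measure_ball_lt_top.ne measure_ball_lt_top.ne
    (integrableOn_ball_linearFormWeight μ f hk x (Λ * r))
    (integrableOn_ball_linearFormWeight μ f hk y (r / A))
    fun z hz w hw => linearFormWeight_le_mul hk hA0 (hcomp z hz w hw)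
  have hpos : 0 < μ.real (ball y (r / A)) :=
    ENNReal.toReal_pos (measure_ball_pos μ y (by positivity)).ne' measure_ball_lt_top.ne
  calc ∫ z in ball x (Λ * r), linearFormWeight s f k z ∂μ
      ≤ K * (Λ * A) ^ n * ∫ z in ball y (r / A), linearFormWeight s f k z ∂μ := by
        refine le_of_mul_le_mul_left (hcross.trans_eq ?_) hpos
        rw [hvol]
        ring
    _ ≤ K * (Λ * A) ^ n * ∫ z in ball x r, linearFormWeight s f k z ∂μ := by
        refine mul_le_mul_of_nonneg_left ?_ (by positivity)
        exact setIntegral_ball_linearFormWeight_mono μ f hk hsub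

lemma exists_setIntegral_ball_linearFormWeight_le_of_dist_le (f : ι → StrongDual ℝ E)
    (hk : ∀ i ∈ s, 0 ≤ k i) {a : ℝ} (ha : 0 ≤ a) :
    ∃ C : ℝ, 1 ≤ C ∧ ∀ (x t : E) (r : ℝ), 0 < r → dist t x ≤ a * r →
      ∫ z in ball t r, linearFormWeight s f k z ∂μ ≤
        C * ∫ z in ball x r, linearFormWeight s f k z ∂μ := by
  obtain ⟨C, hC, hdoubling⟩ := exists_setIntegral_ball_mul_linearFormWeight_le μ f hk
    (Λ := a + 1) (by linarith)
  refine ⟨C, hC, fun x t r hr h => ?_⟩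
  have hsub : ball t r ⊆ ball x ((a + 1) * r) := ball_subset_ball' (by linarith)
  exact (setIntegral_ball_linearFormWeight_mono μ f hk hsub).trans (hdoubling x r hr)

end Haar

lemma exists_wMeas_ball_le_of_dist_le {d : ℕ} {Rp : Finset (Ed d)} {κ : Ed d → ℝ}
    (hκ : ∀ α ∈ Rp, 0 ≤ κ α) {a : ℝ} (ha : 0 ≤ a) :
    ∃ C : ℝ, 1 ≤ C ∧ ∀ (x t : Ed d) (r : ℝ), 0 < r → dist t x ≤ a * r →
      wMeas Rp κ (ball t r) ≤ C * wMeas Rp κ (ball x r) :=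
  exists_setIntegral_ball_linearFormWeight_le_of_dist_le volume
    (innerSL ℝ : Ed d → StrongDual ℝ (Ed d)) (k := fun α => 2 * κ α)
    (fun α hα => mul_nonneg zero_le_two (hκ α hα)) ha

/-! ### Reflections and the orbit distance -/

section Dunkl

variable {d : ℕ}

lemma reflAt_eq_reflection {α : Ed d} (hα : ⟪α, α⟫ = (2 : ℝ)) :
    reflAt α = (ℝ ∙ α)ᗮ.reflection := by
  ext1 x
  rw [real_inner_self_eq_norm_sq] at hα
  rw [Submodule.reflection_orthogonal_apply, Submodule.reflection_singleton_apply, reflAt]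
  simp only [RCLike.ofReal_real_eq_id, id_eq, hα]
  module

lemma reflAt_involutive {α : Ed d} (hα : ⟪α, α⟫ = (2 : ℝ)) : Function.Involutive (reflAt α) := by
  rw [reflAt_eq_reflection hα]
  exact Submodule.reflection_involutive _

lemma reflAt_self {α : Ed d} (hα : ⟪α, α⟫ = (2 : ℝ)) : reflAt α α = -α := by
  rw [reflAt_eq_reflection hα]
  exact Submodule.reflection_orthogonalComplement_singleton_eq_neg α

lemma inner_reflAt_right (α β x : Ed d) : ⟪β, reflAt α x⟫ = ⟪reflAt α β, x⟫ := by
  simp only [reflAt, inner_sub_left, inner_sub_right, real_inner_smul_left, real_inner_smul_right,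
    real_inner_comm α β]
  ring

lemma reflAt_mem_dunklGroup {R : Finset (Ed d)} {α : Ed d} (hα : α ∈ R) :
    (reflAt α : Function.End (Ed d)) ∈ dunklGroup R :=
  Submonoid.subset_closure ⟨α, hα, rfl⟩

lemma dG_nonneg (R : Finset (Ed d)) (x t : Ed d) : 0 ≤ dG R x t :=
  Real.sInf_nonneg (Set.forall_mem_image.2 fun _ _ => dist_nonneg)

lemma dG_le_dist (R : Finset (Ed d)) (x t : Ed d) : dG R x t ≤ dist x t :=
  csInf_le ⟨0, Set.forall_mem_image.2 fun _ _ => dist_nonneg⟩ ⟨1, (dunklGroup R).one_mem, rfl⟩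

lemma exists_dist_lt_of_dG_lt {R : Finset (Ed d)} {x t : Ed d} {s : ℝ} (h : dG R x t < s) :
    ∃ σ ∈ dunklGroup R, dist x (σ t) < s := by
  obtain ⟨_, ⟨σ, hσ, rfl⟩, hlt⟩ := exists_lt_of_csInf_lt
    (Set.Nonempty.image _ ⟨1, (dunklGroup R).one_mem⟩) h
  exact ⟨σ, hσ, hlt⟩

/-! ### Invariance of the Dunkl weight -/

lemma setIntegral_ball_map_eq_of_comp_eq {E F : Type*} [NormedAddCommGroup E]
    [InnerProductSpace ℝ E] [FiniteDimensional ℝ E] [MeasurableSpace E] [BorelSpace E]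
    [NormedAddCommGroup F] [NormedSpace ℝ F] (e : E ≃ₗᵢ[ℝ] E) {w : E → F} (hw : w ∘ e = w)
    (t : E) (r : ℝ) : ∫ x in ball (e t) r, w x = ∫ x in ball t r, w x := by
  have h := e.measurePreserving.setIntegral_preimage_emb
    e.toHomeomorph.measurableEmbedding w (ball (e t) r)
  rw [e.preimage_ball, e.symm_apply_apply] at h
  rw [← h]
  exact congrArg (fun v : E → F => ∫ x in ball t r, v x) hw

namespace IsRootSystem

variable {R Rp : Finset (Ed d)} {κ : Ed d → ℝ}

lemma neg_mem (hRS : IsRootSystem R Rp κ) {α : Ed d} (hα : α ∈ R) : -α ∈ R :=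
  reflAt_self (hRS.norm_two α hα) ▸ hRS.refl_mem α hα α hα

lemma kappa_reflAt (hRS : IsRootSystem R Rp κ) {α β : Ed d} (hα : α ∈ R) (hβ : β ∈ R) :
    κ (reflAt α β) = κ β :=
  hRS.kappa_inv _ (reflAt_mem_dunklGroup hα) β hβ

lemma kappa_neg (hRS : IsRootSystem R Rp κ) {α : Ed d} (hα : α ∈ R) : κ (-α) = κ α :=
  reflAt_self (hRS.norm_two α hα) ▸ hRS.kappa_reflAt hα hα

lemma prod_roots (hRS : IsRootSystem R Rp κ) {M : Type*} [CommMonoid M] (g : Ed d → M) :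
    ∏ α ∈ R, g α = ∏ α ∈ Rp, g α * g (-α) := by
  classical
  have hneg : ∏ α ∈ R \ Rp, g α = ∏ α ∈ Rp, g (-α) := by
    refine Finset.prod_nbij' Neg.neg Neg.neg ?_ ?_ ?_ ?_ ?_
    · intro α hα
      obtain ⟨hαR, hαp⟩ := Finset.mem_sdiff.1 hα
      exact ((hRS.pos_split α hαR).resolve_left fun h => hαp h.1).2
    · intro α hα
      have hαR := hRS.pos_sub hα
      exact Finset.mem_sdiff.2
        ⟨hRS.neg_mem hαR, ((hRS.pos_split α hαR).resolve_right fun h => h.1 hα).2⟩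
    all_goals simp
  rw [Finset.prod_mul_distrib, ← hneg, mul_comm, Finset.prod_sdiff hRS.pos_sub]

lemma Wk_eq_prod_roots (hRS : IsRootSystem R Rp κ) (x : Ed d) :
    Wk Rp κ x = ∏ α ∈ R, |⟪α, x⟫| ^ κ α := by
  rw [hRS.prod_roots]
  refine Finset.prod_congr rfl fun α hα => ?_
  have hκ := hRS.kappa_nonneg α (hRS.pos_sub hα)
  rw [hRS.kappa_neg (hRS.pos_sub hα), inner_neg_left, abs_neg, two_mul,
    Real.rpow_add_of_nonneg (abs_nonneg _) hκ hκ]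

lemma Wk_reflAt (hRS : IsRootSystem R Rp κ) {α : Ed d} (hα : α ∈ R) (x : Ed d) :
    Wk Rp κ (reflAt α x) = Wk Rp κ x := by
  have hinv := reflAt_involutive (hRS.norm_two α hα)
  simp only [hRS.Wk_eq_prod_roots]
  refine Finset.prod_nbij' (reflAt α) (reflAt α) (hRS.refl_mem α hα) (hRS.refl_mem α hα)
    (fun β _ => hinv β) (fun β _ => hinv β) fun β hβ => ?_
  rw [inner_reflAt_right, hRS.kappa_reflAt hα hβ]

lemma wMeas_ball_reflAt (hRS : IsRootSystem R Rp κ) {α : Ed d} (hα : α ∈ R) (t : Ed d) (r : ℝ) :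
    wMeas Rp κ (ball (reflAt α t) r) = wMeas Rp κ (ball t r) := by
  have hrefl := reflAt_eq_reflection (hRS.norm_two α hα)
  have hW : Wk Rp κ ∘ (ℝ ∙ α)ᗮ.reflection = Wk Rp κ := hrefl ▸ funext (hRS.Wk_reflAt hα)
  rw [hrefl]
  exact setIntegral_ball_map_eq_of_comp_eq _ hW t r

lemma wMeas_ball_apply (hRS : IsRootSystem R Rp κ) {σ : Function.End (Ed d)} (hσ : σ ∈ dunklGroup R)
    (t : Ed d) (r : ℝ) :
    wMeas Rp κ (ball (σ t) r) = wMeas Rp κ (ball t r) := by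
  induction hσ using Submonoid.closure_induction generalizing t with
  | mem _ hf =>
    obtain ⟨α, hα, rfl⟩ := hf
    exact hRS.wMeas_ball_reflAt hα t r
  | one => rfl
  | mul f g _ _ hf hg => exact (hf (g t)).trans (hg t)

lemma exists_wMeas_ball_le_of_dG_le (hRS : IsRootSystem R Rp κ) :
    ∃ C : ℝ, 1 ≤ C ∧ ∀ (x t : Ed d) (r : ℝ), 0 < r → dG R x t ≤ r →
      wMeas Rp κ (ball t r) ≤ C * wMeas Rp κ (ball x r) ∧
      wMeas Rp κ (ball x r) ≤ C * wMeas Rp κ (ball t r) := by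
  have hκ : ∀ α ∈ Rp, 0 ≤ κ α := fun α hα => hRS.kappa_nonneg α (hRS.pos_sub hα)
  obtain ⟨C, hC, hclose⟩ := exists_wMeas_ball_le_of_dist_le hκ zero_le_two
  refine ⟨C, hC, fun x t r hr h => ?_⟩
  obtain ⟨σ, hσ, hlt⟩ := exists_dist_lt_of_dG_lt (h.trans_lt (by linarith : r < 2 * r))
  rw [← hRS.wMeas_ball_apply hσ t r]
  exact ⟨hclose x (σ t) r hr (dist_comm x (σ t) ▸ hlt.le), hclose (σ t) x r hr hlt.le⟩

end IsRootSystem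

end Dunkl

/-- **Lemma 4.2 (comparability of weighted balls).** There is a constant `c ≥ 1`,
depending only on `d`, `R` and `κ`, such that `|B(t,r)|_κ ≍ |B(x,r)|_κ` whenever
`d(x,t) ≤ r`; in particular `|B(x, y+|x−t|)|_κ ≍ |B(t, y+|x−t|)|_κ` and
`|B(x, y+d(x,t))|_κ ≍ |B(t, y+d(x,t))|_κ`. -/
theorem weighted_ball_comparable
    {d : ℕ} (hd : 1 ≤ d) (R Rp : Finset (Ed d)) (κ : Ed d → ℝ)
    (hRS : IsRootSystem R Rp κ) :
    ∃ c : ℝ, 1 ≤ c ∧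
      (∀ x t : Ed d, ∀ r : ℝ, 0 < r → dG R x t ≤ r →
        wMeas Rp κ (ball t r) ≤ c * wMeas Rp κ (ball x r) ∧
        wMeas Rp κ (ball x r) ≤ c * wMeas Rp κ (ball t r)) ∧
      (∀ x t : Ed d, ∀ y : ℝ, 0 < y →
        (wMeas Rp κ (ball t (y + dist x t)) ≤ c * wMeas Rp κ (ball x (y + dist x t)) ∧
         wMeas Rp κ (ball x (y + dist x t)) ≤ c * wMeas Rp κ (ball t (y + dist x t))) ∧
        (wMeas Rp κ (ball t (y + dG R x t)) ≤ c * wMeas Rp κ (ball x (y + dG R x t)) ∧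
         wMeas Rp κ (ball x (y + dG R x t)) ≤ c * wMeas Rp κ (ball t (y + dG R x t)))) := by
  obtain ⟨c, hc, hcomp⟩ := hRS.exists_wMeas_ball_le_of_dG_le
  refine ⟨c, hc, hcomp, fun x t y hy => ⟨hcomp x t _ (by positivity) ?_, hcomp x t _ ?_ ?_⟩⟩
  · exact (dG_le_dist R x t).trans (le_add_of_nonneg_left hy.le)
  · exact add_pos_of_pos_of_nonneg hy (dG_nonneg R x t)
  · exact le_add_of_nonneg_left hy.le

end
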